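/- arXiv:2203.17096 — 3 statements merged into one kernel-verified Lean document; each statement's English description precedes it below -/
import Mathlib

section
/- (Proposition 1) Let M be the All Attack Structure constructed from plant G, supervisor S realized by H, and vulnerable events Σ_v. For every extended string h ∈ L_e(M), letting β = tam(h) and (q, q̃, z) = f(q₀, h), the current-state estimate of the supervisor on the doctored observation β equals the unobservable reach of q: E^C_{S/G}(β) = UR_{Δ_H(z)}(q). -/
open scoped Classical

namespace DES

variable {X E Z : Type*}

/-- Run of a partial automaton on a string of events. -/
def runStr (δ : X → E → Option X) : X → List E → Option X
  | x, [] => some x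
  | x, σ :: s => (δ x σ).bind fun y => runStr δ y s

/-- Open-loop language generated from a state. -/
def LangFrom (δ : X → E → Option X) (x0 : X) : Set (List E) :=
  {s | (runStr δ x0 s).isSome}

/-- Open-loop language of the plant. -/
def Lang (δ : X → E → Option X) (X0 : Set X) : Set (List E) :=
  {s | ∃ x0 ∈ X0, s ∈ LangFrom δ x0}

/-- Natural projection erasing unobservable events. -/
noncomputable def proj (Eobs : Set E) (s : List E) : List E :=
  s.filter fun e => decide (e ∈ Eobs)

/-- Closed-loop language of `S/G` from initial state `x0`. -/
inductive CLLang (δ : X → E → Option X) (Eobs : Set E) (S : List E → Set E) (x0 : X) :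
    List E → Prop
  | nil : CLLang δ Eobs S x0 []
  | snoc (s : List E) (σ : E) : CLLang δ Eobs S x0 s →
      (runStr δ x0 (s ++ [σ])).isSome → σ ∈ S (proj Eobs s) → CLLang δ Eobs S x0 (s ++ [σ])

/-- Closed-loop language of `S/G`. -/
def CLLangAll (δ : X → E → Option X) (Eobs : Set E) (S : List E → Set E) (X0 : Set X) :
    Set (List E) := {s | ∃ x0 ∈ X0, CLLang δ Eobs S x0 s}

/-- Projection of a language. -/
def projSet (Eobs : Set E) (L : Set (List E)) : Set (List E) := proj Eobs '' L

/-- Current-state estimate of the closed-loop system. -/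
def ECest (δ : X → E → Option X) (Eobs : Set E) (S : List E → Set E) (X0 : Set X)
    (α : List E) : Set X :=
  {x | ∃ x0 ∈ X0, ∃ s, CLLang δ Eobs S x0 s ∧ proj Eobs s = α ∧ runStr δ x0 s = some x}

/-- Initial-state estimate of the closed-loop system. -/
def EIest (δ : X → E → Option X) (Eobs : Set E) (S : List E → Set E) (X0 : Set X)
    (α : List E) : Set X :=
  {x0 | x0 ∈ X0 ∧ ∃ s, CLLang δ Eobs S x0 s ∧ proj Eobs s = α}

/-- Unobservable reach of `q` under control decision `γ`. -/
def URset (δ : X → E → Option X) (Euo γ : Set E) (q : Set X) : Set X :=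
  {y | ∃ x ∈ q, ∃ s : List E, (∀ e ∈ s, e ∈ Euo ∩ γ) ∧ runStr δ x s = some y}

/-- Observable reach of `q` upon occurrence of `σ`. -/
def NXset (δ : X → E → Option X) (σ : E) (q : Set X) : Set X :=
  {y | ∃ x ∈ q, δ x σ = some y}

/-- Events that can be observed from `q` under control decision `γ`. -/
def Oset (δ : X → E → Option X) (Eobs Euo : Set E) (q : Set X) (γ : Set E) : Set E :=
  {σ | σ ∈ Eobs ∩ γ ∧ ∃ x ∈ q, ∃ w : List E, (∀ e ∈ w, e ∈ Euo ∩ γ) ∧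
      (runStr δ x (w ++ [σ])).isSome}

/-- Transition function of the augmented system `~G`. -/
def augDelta (δ : X → E → Option X) : X × X → E → Option (X × X) :=
  fun p σ => (δ p.2 σ).map fun y => (p.1, y)

/-- Initial states of the augmented system. -/
def augX0 (X0 : Set X) : Set (X × X) := {p | p.1 ∈ X0 ∧ p.2 = p.1}

/-- First components of a set of augmented states. -/
def Iset (qt : Set (X × X)) : Set X := Prod.fst '' qt

/-- Active events of the supervisor automaton `H` at state `z`. -/
def ΔH (ξ : Z → E → Option Z) (z : Z) : Set E := {σ | (ξ z σ).isSome}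

/-- Active events at `some z`, and `∅` at the attack-detected state `z_att = none`. -/
def ΔHopt (ξ : Z → E → Option Z) : Option Z → Set E
  | some z => ΔH ξ z
  | none => ∅

/-- `H = (Z, Σ, ξ, z₀)` realizes supervisor `S`. -/
def Realizes (ξ : Z → E → Option Z) (z0 : Z) (δ : X → E → Option X)
    (Eobs : Set E) (S : List E → Set E) (X0 : Set X) : Prop :=
  (∀ z σ z', ξ z σ = some z' → z' ≠ z → σ ∈ Eobs) ∧
  (∀ s ∈ CLLangAll δ Eobs S X0, ∃ z, runStr ξ z0 s = some z ∧ ΔH ξ z = S (proj Eobs s))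

/-- Product automaton `G × H`. -/
def prodDelta (δ : X → E → Option X) (ξ : Z → E → Option Z) :
    X × Z → E → Option (X × Z) :=
  fun p σ => (δ p.1 σ).bind fun x' => (ξ p.2 σ).map fun z' => (x', z')

/-- Environment states of the AAS: `(q, qt, z)` with `z = none` encoding `z_att`. -/
abbrev EnvState (X Z : Type*) := Set X × Set (X × X) × Option Z

/-- Attack states of the AAS: `(q, qt, z, σ)`. -/
abbrev AtkState (X Z E : Type*) := Set X × Set (X × X) × Z × E

/-- States of the AAS. -/
abbrev MState (X Z E : Type*) := EnvState X Z ⊕ AtkState X Z E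

/-- Events of the AAS: `Sum.inl σ` is a genuine event, `Sum.inr (some σ)` is `σ̂`,
and `Sum.inr none` is `ε̂`. -/
abbrev MEvent (E : Type*) := E ⊕ Option E

/-- Action space `V(σ)` of the attacker. -/
def Vmap (Ev : Set E) (σ : E) : Set (Option E) :=
  if σ ∈ Ev then {a | ∃ σ', a = some σ' ∧ σ' ∈ Ev} ∪ {none} else {some σ}

/-- Transition function of the All Attack Structure. -/
noncomputable def AASf (δ : X → E → Option X) (Eobs Euo Ev : Set E)
    (ξ : Z → E → Option Z) : MState X Z E → MEvent E → Option (MState X Z E)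
  | Sum.inl (q, qt, some z), Sum.inl σ =>
      if σ ∈ Oset (augDelta δ) Eobs Euo qt (ΔH ξ z) then some (Sum.inr (q, qt, z, σ))
      else none
  | Sum.inr (q, qt, z, σ), Sum.inr a =>
      if a ∈ Vmap Ev σ then
        let q' : Set X := match a with
          | some σa => NXset δ σa (URset δ Euo (ΔH ξ z) q)
          | none => URset δ Euo (ΔH ξ z) q
        let qt' : Set (X × X) := NXset (augDelta δ) σ (URset (augDelta δ) Euo (ΔH ξ z) qt)
        if q'.Nonempty then
          match a with
          | some σa => (ξ z σa).map fun z' => Sum.inl (q', qt', some z')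
          | none => some (Sum.inl (q', qt', some z))
        else some (Sum.inl (q', qt', (none : Option Z)))
      else none
  | _, _ => none

/-- Initial state of the AAS. -/
def AASq0 (X0 : Set X) (z0 : Z) : MState X Z E := Sum.inl (X0, augX0 X0, some z0)

/-- Actual observation of an extended string. -/
def obs : List (MEvent E) → List E :=
  List.filterMap fun e => match e with | Sum.inl σ => some σ | Sum.inr _ => none

/-- Tampered (doctored) observation of an extended string. -/
def tam : List (MEvent E) → List E :=
  List.filterMap fun e => match e with | Sum.inl _ => none | Sum.inr a => a

/-- `h` is an extended string of the structure with transition function `f`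
ending at an environment state. -/
def LeM (f : MState X Z E → MEvent E → Option (MState X Z E)) (q0 : MState X Z E)
    (h : List (MEvent E)) : Prop :=
  ∃ qe : EnvState X Z, runStr f q0 h = some (Sum.inl qe)

/-- `A` is an attacker (with `none` encoding `ε`). -/
def IsAttacker (δ : X → E → Option X) (Eobs Ev : Set E) (X0 : Set X)
    (A : List E → Option E) : Prop :=
  A [] = none ∧
  ∀ α σ, (α ++ [σ]) ∈ projSet Eobs (Lang δ X0) →
    (σ ∉ Ev → A (α ++ [σ]) = some σ) ∧ (σ ∈ Ev → A (α ++ [σ]) ∈ Vmap Ev σ)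

/-- The string-modification map `g_A` induced by attacker `A`. -/
def gA (A : List E → Option E) (α : List E) : List E :=
  (List.range α.length).filterMap fun i => A (α.take (i + 1))

/-- The extended string `α_A` determined by attacker `A` and observation `α`
(the first argument is the accumulated prefix). -/
def extStr (A : List E → Option E) : List E → List E → List (MEvent E)
  | _, [] => []
  | pre, σ :: rest =>
      Sum.inl σ :: Sum.inr (A (pre ++ [σ])) :: extStr A (pre ++ [σ]) rest

/-- Positive detected environment state. -/
def PosDet (Xsec : Set X) (qe : EnvState X Z) : Prop := Iset qe.2.1 ⊆ Xsec

/-- Negative detected environment state. -/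
def NegDet (Xsec : Set X) (qe : EnvState X Z) : Prop := Iset qe.2.1 ∩ Xsec = ∅

/-- Undetectable environment state. -/
def Undet (δ : X → E → Option X) (Euo : Set E) (ξ : Z → E → Option Z)
    (Xsec : Set X) (qe : EnvState X Z) : Prop :=
  (Iset qe.2.1 ∩ Xsec).Nonempty ∧
  ∀ p ∈ URset (augDelta δ) Euo (ΔHopt ξ qe.2.2) qe.2.1, p.1 ∈ Xsec →
    ∃ p' ∈ URset (augDelta δ) Euo (ΔHopt ξ qe.2.2) qe.2.1, p'.2 = p.2 ∧ p'.1 ∉ Xsec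

/-- Transition function of the simplified AAS: all outgoing transitions from
detected and undetectable environment states are removed. -/
noncomputable def SAASf (δ : X → E → Option X) (Eobs Euo Ev : Set E)
    (ξ : Z → E → Option Z) (Xsec : Set X) :
    MState X Z E → MEvent E → Option (MState X Z E) := fun st e =>
  match st with
  | Sum.inl qe =>
      if PosDet Xsec qe ∨ NegDet Xsec qe ∨ Undet δ Euo ξ Xsec qe then none
      else AASf δ Eobs Euo Ev ξ st e
  | Sum.inr _ => AASf δ Eobs Euo Ev ξ st e

/-- Reachability in a structure over AAS states. -/
def ReachableFrom (f : MState X Z E → MEvent E → Option (MState X Z E))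
    (st st' : MState X Z E) : Prop := ∃ t, runStr f st t = some st'

/-- `fm` is (the transition function of) a single attack structure of the
simplified AAS. -/
def IsSAS (δ : X → E → Option X) (Eobs Euo Ev : Set E) (ξ : Z → E → Option Z)
    (z0 : Z) (X0 Xsec : Set X)
    (fm : MState X Z E → MEvent E → Option (MState X Z E)) : Prop :=
  (∀ st e st', fm st e = some st' → SAASf δ Eobs Euo Ev ξ Xsec st e = some st') ∧
  (∀ qa : AtkState X Z E, ReachableFrom fm (AASq0 X0 z0) (Sum.inr qa) →
      ∃! e, (fm (Sum.inr qa) e).isSome = true) ∧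
  (∀ qe : EnvState X Z, ReachableFrom fm (AASq0 X0 z0) (Sum.inl qe) →
      ∀ e, fm (Sum.inl qe) e = SAASf δ Eobs Euo Ev ξ Xsec (Sum.inl qe) e)

/-- `Am` is the attack strategy induced by the single attack structure `fm`. -/
def InducedStrategy (δ : X → E → Option X) (Eobs : Set E) (X0 : Set X)
    (fm : MState X Z E → MEvent E → Option (MState X Z E)) (z0 : Z)
    (Am : List E → Option E) : Prop :=
  Am [] = none ∧
  ∀ α σ, (α ++ [σ]) ∈ projSet Eobs (Lang δ X0) →
    ((∀ h, LeM fm (AASq0 X0 z0) h → obs h ≠ α ++ [σ]) → Am (α ++ [σ]) = some σ) ∧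
    (∀ h, LeM fm (AASq0 X0 z0) h → obs h = α ++ [σ] →
        h.getLast? = some (Sum.inr (Am (α ++ [σ]))))

/-- Attacker `A` is IS-detectable. -/
def ISDetectable (δ : X → E → Option X) (Eobs : Set E) (S : List E → Set E)
    (X0 Xsec : Set X) (A : List E → Option E) : Prop :=
  ∃ α σ, σ ∈ Eobs ∧
    (α ++ [σ]) ∈ projSet Eobs (CLLangAll δ Eobs (fun β => S (gA A β)) X0) ∧
    (ECest δ Eobs S X0 (gA A α)).Nonempty ∧
    EIest δ Eobs (fun β => S (gA A β)) X0 (α ++ [σ]) ⊆ Xsec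


/-!
The estimate of the supervisor obeys a recursion of its own: the estimate on the empty observation
is the unobservable reach of the initial states, and the estimate on `βσ` is the unobservable reach
of the `σ`-successors of the estimate on `β`, all under the decisions `S` issues along the way. The
first component of the All Attack Structure runs the same recursion on the doctored observation,
with the decision `Δ_H(z)` in place of `S β`. The two decisions agree as long as the estimate is
nonempty: some closed-loop string then projects to `β`, and `H`, which moves on observable events
only, reaches the same state along that string as along `β`. Once the estimate is empty, the
decisions no longer matter.
-/

section Runs

variable {δ : X → E → Option X}

theorem runStr_append_singleton (x : X) (s : List E) (σ : E) :
    runStr δ x (s ++ [σ]) = (runStr δ x s).bind fun y => δ y σ := by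
  induction s generalizing x with
  | nil => simp [runStr]
  | cons a s ih => simp only [List.cons_append, runStr, Option.bind_assoc, ih]

theorem runStr_append_singleton_eq_some {x y y' : X} {s : List E} {σ : E}
    (hrun : runStr δ x s = some y) (hstep : δ y σ = some y') :
    runStr δ x (s ++ [σ]) = some y' := by
  rw [runStr_append_singleton, hrun, Option.bind_some, hstep]

theorem runStr_induction {P : List E → X → Prop} {x₀ : X} (nil : P [] x₀)
    (snoc : ∀ s x σ y, P s x → δ x σ = some y → P (s ++ [σ]) y) {s : List E} {x : X}
    (hrun : runStr δ x₀ s = some x) : P s x := by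
  induction s using List.reverseRecOn generalizing x with
  | nil => exact Option.some.inj hrun ▸ nil
  | append_singleton s σ ih =>
    rw [runStr_append_singleton] at hrun
    obtain ⟨y, hy, hyx⟩ := Option.bind_eq_some_iff.1 hrun
    exact snoc s y σ x (ih hy) hyx

theorem proj_append_singleton_of_mem {Eobs : Set E} {σ : E} (hσ : σ ∈ Eobs) (s : List E) :
    proj Eobs (s ++ [σ]) = proj Eobs s ++ [σ] := by
  simp [proj, hσ]

theorem proj_append_singleton_of_notMem {Eobs : Set E} {σ : E} (hσ : σ ∉ Eobs) (s : List E) :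
    proj Eobs (s ++ [σ]) = proj Eobs s := by
  simp [proj, hσ]

theorem runStr_proj {ξ : Z → E → Option Z} {Eobs : Set E}
    (hself : ∀ z σ z', ξ z σ = some z' → z' ≠ z → σ ∈ Eobs) {z₀ z : Z} {s : List E}
    (hrun : runStr ξ z₀ s = some z) : runStr ξ z₀ (proj Eobs s) = some z := by
  refine runStr_induction (P := fun s z => runStr ξ z₀ (proj Eobs s) = some z) rfl ?_ hrun
  intro s z σ z' hz hstep
  by_cases hσ : σ ∈ Eobs
  · rw [proj_append_singleton_of_mem hσ]
    exact runStr_append_singleton_eq_some hz hstep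
  · have hloop : z' = z := by_contra fun hne => hσ (hself z σ z' hstep hne)
    rw [proj_append_singleton_of_notMem hσ, hz, hloop]

end Runs

section UnobservableReach

variable {δ : X → E → Option X} {Euo γ : Set E} {q p : Set X}

theorem subset_URset : q ⊆ URset δ Euo γ q :=
  fun x hx => ⟨x, hx, [], by simp, rfl⟩

theorem mem_URset_of_step {x y : X} {σ : E} (hx : x ∈ URset δ Euo γ q) (hσ : σ ∈ Euo ∩ γ)
    (hstep : δ x σ = some y) : y ∈ URset δ Euo γ q := by
  obtain ⟨x₀, hx₀, s, hs, hrun⟩ := hx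
  have hsσ : ∀ e ∈ s ++ [σ], e ∈ Euo ∩ γ := List.forall_mem_append.2 ⟨hs, by simpa using hσ⟩
  exact ⟨x₀, hx₀, s ++ [σ], hsσ, runStr_append_singleton_eq_some hrun hstep⟩

theorem URset_subset (hqp : q ⊆ p)
    (hstep : ∀ x ∈ p, ∀ σ ∈ Euo ∩ γ, ∀ y, δ x σ = some y → y ∈ p) : URset δ Euo γ q ⊆ p := by
  rintro y ⟨x, hx, s, hs, hrun⟩
  refine runStr_induction (P := fun s y => (∀ e ∈ s, e ∈ Euo ∩ γ) → y ∈ p)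
    (fun _ => hqp hx) ?_ hrun hs
  intro s x σ y ih hxy hsσ
  exact hstep x (ih fun e he => hsσ e (by simp [he])) σ (hsσ σ (by simp)) y hxy

theorem URset_URset : URset δ Euo γ (URset δ Euo γ q) = URset δ Euo γ q :=
  (URset_subset subset_rfl fun _ hx _ hσ _ hstep => mem_URset_of_step hx hσ hstep).antisymm
    subset_URset

theorem URset_empty : URset δ Euo γ ∅ = ∅ :=
  Set.subset_empty_iff.1 (URset_subset subset_rfl (by simp))

theorem NXset_empty {σ : E} : NXset δ σ ∅ = ∅ := by
  simp [NXset]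

end UnobservableReach

section CurrentStateEstimate

variable {δ : X → E → Option X} {Eobs : Set E} {S : List E → Set E} {X0 : Set X}

theorem subset_ECest_nil : X0 ⊆ ECest δ Eobs S X0 [] :=
  fun x hx => ⟨x, hx, [], .nil, rfl, rfl⟩

theorem mem_ECest_of_unobservable_step {β : List E} {x y : X} {σ : E}
    (hx : x ∈ ECest δ Eobs S X0 β) (hσ : σ ∈ Eobsᶜ ∩ S β) (hstep : δ x σ = some y) :
    y ∈ ECest δ Eobs S X0 β := by
  obtain ⟨x₀, hx₀, s, hs, rfl, hrun⟩ := hx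
  have hrun' := runStr_append_singleton_eq_some hrun hstep
  exact ⟨x₀, hx₀, s ++ [σ], .snoc s σ hs (by simp [hrun']) hσ.2,
    proj_append_singleton_of_notMem hσ.1 s, hrun'⟩

theorem mem_ECest_of_observable_step {β : List E} {x y : X} {σ : E}
    (hx : x ∈ ECest δ Eobs S X0 β) (hσ : σ ∈ Eobs ∩ S β) (hstep : δ x σ = some y) :
    y ∈ ECest δ Eobs S X0 (β ++ [σ]) := by
  obtain ⟨x₀, hx₀, s, hs, rfl, hrun⟩ := hx
  have hrun' := runStr_append_singleton_eq_some hrun hstep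
  exact ⟨x₀, hx₀, s ++ [σ], .snoc s σ hs (by simp [hrun']) hσ.2,
    proj_append_singleton_of_mem hσ.1 s, hrun'⟩

theorem ECest_induction {P : List E → X → Prop} (init : ∀ x ∈ X0, P [] x)
    (unobservable_step : ∀ β x σ y, P β x → σ ∈ Eobsᶜ ∩ S β → δ x σ = some y → P β y)
    (observable_step : ∀ β x σ y, x ∈ ECest δ Eobs S X0 β → σ ∈ Eobs ∩ S β →
      δ x σ = some y → P (β ++ [σ]) y)
    {β : List E} {x : X} (hx : x ∈ ECest δ Eobs S X0 β) : P β x := by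
  obtain ⟨x₀, hx₀, s, hs, rfl, hrun⟩ := hx
  induction hs generalizing x with
  | nil => exact Option.some.inj hrun ▸ init x₀ hx₀
  | snoc s σ hs _ hσ ih =>
    rw [runStr_append_singleton] at hrun
    obtain ⟨y, hy, hyx⟩ := Option.bind_eq_some_iff.1 hrun
    by_cases hobs : σ ∈ Eobs
    · rw [proj_append_singleton_of_mem hobs]
      exact observable_step _ y σ x ⟨x₀, hx₀, s, hs, rfl, hy⟩ ⟨hobs, hσ⟩ hyx
    · rw [proj_append_singleton_of_notMem hobs]
      exact unobservable_step _ y σ x (ih hy) ⟨hobs, hσ⟩ hyx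

theorem URset_subset_ECest {β : List E} {q : Set X} (hq : q ⊆ ECest δ Eobs S X0 β) :
    URset δ Eobsᶜ (S β) q ⊆ ECest δ Eobs S X0 β :=
  URset_subset hq fun _ hx _ hσ _ hstep => mem_ECest_of_unobservable_step hx hσ hstep

theorem ECest_nil : ECest δ Eobs S X0 [] = URset δ Eobsᶜ (S []) X0 := by
  refine Set.Subset.antisymm (fun x hx => ?_) (URset_subset_ECest subset_ECest_nil)
  refine ECest_induction (P := fun β x => β = [] → x ∈ URset δ Eobsᶜ (S β) X0)
    (fun x hx _ => subset_URset hx) ?_ ?_ hx rfl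
  · exact fun β x σ y ih hσ hstep hβ => mem_URset_of_step (ih hβ) hσ hstep
  · exact fun β x σ y _ _ _ hβ => absurd hβ (by simp)

theorem ECest_append_singleton_subset (β : List E) (σ : E) :
    ECest δ Eobs S X0 (β ++ [σ]) ⊆
      URset δ Eobsᶜ (S (β ++ [σ])) (NXset δ σ (ECest δ Eobs S X0 β)) := by
  intro x hx
  refine ECest_induction (P := fun β' x => β' = β ++ [σ] →
    x ∈ URset δ Eobsᶜ (S β') (NXset δ σ (ECest δ Eobs S X0 β))) ?_ ?_ ?_ hx rfl
  · exact fun x _ hβ => absurd hβ (by simp)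
  · exact fun β' x τ y ih hτ hstep hβ => mem_URset_of_step (ih hβ) hτ hstep
  · intro β' y τ y' hy _ hstep hβ
    obtain ⟨rfl, hτ⟩ := List.append_inj' hβ rfl
    obtain rfl := List.singleton_injective hτ
    exact subset_URset ⟨y, hy, hstep⟩

theorem ECest_append_singleton {β : List E} {σ : E} (hσ : σ ∈ Eobs ∩ S β) :
    ECest δ Eobs S X0 (β ++ [σ]) =
      URset δ Eobsᶜ (S (β ++ [σ])) (NXset δ σ (ECest δ Eobs S X0 β)) := by
  refine (ECest_append_singleton_subset β σ).antisymm (URset_subset_ECest ?_)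
  rintro y ⟨x, hx, hstep⟩
  exact mem_ECest_of_observable_step hx hσ hstep

theorem ECest_append_singleton_eq_empty {β : List E} {σ : E}
    (hnext : NXset δ σ (ECest δ Eobs S X0 β) = ∅) : ECest δ Eobs S X0 (β ++ [σ]) = ∅ := by
  have hsub := ECest_append_singleton_subset (δ := δ) (Eobs := Eobs) (S := S) (X0 := X0) β σ
  rwa [hnext, URset_empty, Set.subset_empty_iff] at hsub

end CurrentStateEstimate

section Realization

variable {δ : X → E → Option X} {Eobs : Set E} {S : List E → Set E} {X0 : Set X}
  {ξ : Z → E → Option Z} {z0 : Z}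

theorem Realizes.decision_eq (hreal : Realizes ξ z0 δ Eobs S X0) {β : List E} {z : Z}
    (hz : runStr ξ z0 β = some z) (hne : (ECest δ Eobs S X0 β).Nonempty) : S β = ΔH ξ z := by
  obtain ⟨x, x₀, hx₀, s, hs, rfl, -⟩ := hne
  obtain ⟨z', hz', hΔ⟩ := hreal.2 s ⟨x₀, hx₀, hs⟩
  have hzz' : z = z' := Option.some.inj (hz.symm.trans (runStr_proj hreal.1 hz'))
  rw [hzz', hΔ]

theorem Realizes.URset_decision_eq (hreal : Realizes ξ z0 δ Eobs S X0) {β : List E} {z : Z}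
    (hz : runStr ξ z0 β = some z) {q : Set X} (hq : q ⊆ ECest δ Eobs S X0 β) (Euo : Set E) :
    URset δ Euo (S β) q = URset δ Euo (ΔH ξ z) q := by
  rcases q.eq_empty_or_nonempty with rfl | hne
  · rw [URset_empty, URset_empty]
  · rw [hreal.decision_eq hz (hne.mono hq)]

theorem Realizes.ECest_nil (hreal : Realizes ξ z0 δ Eobs S X0) :
    ECest δ Eobs S X0 [] = URset δ Eobsᶜ (ΔH ξ z0) X0 := by
  rw [DES.ECest_nil, hreal.URset_decision_eq rfl subset_ECest_nil]

theorem Realizes.ECest_append_singleton (hreal : Realizes ξ z0 δ Eobs S X0) {β : List E}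
    {z z' : Z} {σ : E} (hz : runStr ξ z0 β = some z) (hσ : σ ∈ Eobs) (hstep : ξ z σ = some z') :
    ECest δ Eobs S X0 (β ++ [σ]) =
      URset δ Eobsᶜ (ΔH ξ z') (NXset δ σ (ECest δ Eobs S X0 β)) := by
  rcases (ECest δ Eobs S X0 β).eq_empty_or_nonempty with hempty | hne
  · have hnext : NXset δ σ (ECest δ Eobs S X0 β) = ∅ := by rw [hempty, NXset_empty]
    rw [ECest_append_singleton_eq_empty hnext, hnext, URset_empty]
  · have hσS : σ ∈ S β := by
      rw [hreal.decision_eq hz hne]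
      exact Option.isSome_of_eq_some hstep
    have hEC := DES.ECest_append_singleton (δ := δ) (X0 := X0) ⟨hσ, hσS⟩
    rw [hEC]
    exact hreal.URset_decision_eq (runStr_append_singleton_eq_some hz hstep)
      (hEC ▸ subset_URset) _

end Realization

section AllAttackStructure

variable {δ : X → E → Option X} {Eobs Ev : Set E} {S : List E → Set E} {X0 : Set X}
  {ξ : Z → E → Option Z} {z0 : Z}

theorem tam_append (h h' : List (MEvent E)) : tam (h ++ h') = tam h ++ tam h' :=
  List.filterMap_append

theorem mem_of_some_mem_Vmap (hv : Ev ⊆ Eobs) {σ τ : E} (hσ : σ ∈ Eobs)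
    (hτ : some τ ∈ Vmap Ev σ) : τ ∈ Eobs := by
  unfold Vmap at hτ
  split_ifs at hτ
  · exact hv (by simpa using hτ)
  · obtain rfl : τ = σ := by simpa using hτ
    exact hσ

/-- The components `q` and `zo` of a state of the All Attack Structure are consistent with the
doctored observation `β`: together they determine the supervisor's estimate on `β`, and `H` is in
state `zo` after `β`. The latter asks for nothing at `zo = none`, i.e. once the attack has been
detected. -/
structure ConsistentWith (δ : X → E → Option X) (Eobs : Set E) (S : List E → Set E) (X0 : Set X)
    (ξ : Z → E → Option Z) (z0 : Z) (β : List E) (q : Set X) (zo : Option Z) : Prop where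
  ECest_eq : ECest δ Eobs S X0 β = URset δ Eobsᶜ (ΔHopt ξ zo) q
  runStr_eq : ∀ z ∈ zo, runStr ξ z0 β = some z

/-- The invariant of the All Attack Structure: every state reached with doctored observation `β` is
consistent with `β`, and an attack state waits for the attacker to alter an observable event. -/
def AASInvariant (δ : X → E → Option X) (Eobs : Set E) (S : List E → Set E) (X0 : Set X)
    (ξ : Z → E → Option Z) (z0 : Z) (β : List E) : MState X Z E → Prop
  | Sum.inl (q, _, zo) => ConsistentWith δ Eobs S X0 ξ z0 β q zo
  | Sum.inr (q, _, z, σ) => ConsistentWith δ Eobs S X0 ξ z0 β q (some z) ∧ σ ∈ Eobs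

theorem ConsistentWith.of_ECest_eq_empty {β : List E} (hβ : ECest δ Eobs S X0 β = ∅) :
    ConsistentWith δ Eobs S X0 ξ z0 β ∅ none :=
  ⟨by rw [hβ, URset_empty], by simp⟩

theorem ConsistentWith.init (hreal : Realizes ξ z0 δ Eobs S X0) :
    ConsistentWith δ Eobs S X0 ξ z0 [] X0 (some z0) :=
  ⟨hreal.ECest_nil, by simp [runStr]⟩

theorem ConsistentWith.erase {β : List E} {q : Set X} {z : Z}
    (hq : ConsistentWith δ Eobs S X0 ξ z0 β q (some z)) :
    ConsistentWith δ Eobs S X0 ξ z0 β (URset δ Eobsᶜ (ΔH ξ z) q) (some z) :=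
  ⟨hq.ECest_eq.trans URset_URset.symm, hq.runStr_eq⟩

theorem ConsistentWith.observe (hreal : Realizes ξ z0 δ Eobs S X0) {β : List E} {q : Set X}
    {z z' : Z} {σ : E} (hq : ConsistentWith δ Eobs S X0 ξ z0 β q (some z)) (hσ : σ ∈ Eobs)
    (hstep : ξ z σ = some z') :
    ConsistentWith δ Eobs S X0 ξ z0 (β ++ [σ]) (NXset δ σ (URset δ Eobsᶜ (ΔH ξ z) q))
      (some z') := by
  have hz : runStr ξ z0 β = some z := hq.runStr_eq z rfl
  refine ⟨?_, ?_⟩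
  · rw [hreal.ECest_append_singleton hz hσ hstep, hq.ECest_eq]
    rfl
  · rintro _ ⟨⟩
    exact runStr_append_singleton_eq_some hz hstep

theorem AASInvariant.env_step {β : List E} {qe : EnvState X Z} {e : MEvent E}
    {st : MState X Z E} (hqe : AASInvariant δ Eobs S X0 ξ z0 β (Sum.inl qe : MState X Z E))
    (hstep : AASf δ Eobs Eobsᶜ Ev ξ (Sum.inl qe) e = some st) :
    AASInvariant δ Eobs S X0 ξ z0 (β ++ tam [e]) st := by
  obtain ⟨q, qt, _ | z⟩ := qe <;> rcases e with σ | a <;> simp only [AASf, reduceCtorEq] at hstep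
  split_ifs at hstep with hσ
  cases hstep
  rw [show tam [(Sum.inl σ : MEvent E)] = [] from rfl, List.append_nil]
  exact ⟨hqe, hσ.1.1⟩

theorem AASInvariant.attack_step (hv : Ev ⊆ Eobs) (hreal : Realizes ξ z0 δ Eobs S X0)
    {β : List E} {qa : AtkState X Z E} {e : MEvent E} {st : MState X Z E}
    (hqa : AASInvariant δ Eobs S X0 ξ z0 β (Sum.inr qa : MState X Z E))
    (hstep : AASf δ Eobs Eobsᶜ Ev ξ (Sum.inr qa) e = some st) :
    AASInvariant δ Eobs S X0 ξ z0 (β ++ tam [e]) st := by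
  obtain ⟨q, qt, z, σ⟩ := qa
  obtain ⟨hq, hσ⟩ := hqa
  have hEC : ECest δ Eobs S X0 β = URset δ Eobsᶜ (ΔH ξ z) q := hq.ECest_eq
  rcases e with σ' | _ | τ <;> simp only [AASf, reduceCtorEq] at hstep <;>
    split_ifs at hstep with ha hne
  · cases hstep
    simpa [tam, AASInvariant] using hq.erase
  · cases hstep
    rw [Set.not_nonempty_iff_eq_empty] at hne
    simpa [tam, AASInvariant, hne] using ConsistentWith.of_ECest_eq_empty (hEC.trans hne)
  · obtain ⟨z', hz', rfl⟩ := Option.map_eq_some_iff.1 hstep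
    exact hq.observe hreal (mem_of_some_mem_Vmap hv hσ ha) hz'
  · cases hstep
    rw [Set.not_nonempty_iff_eq_empty] at hne
    have hempty := ECest_append_singleton_eq_empty (hEC ▸ hne)
    simpa [tam, AASInvariant, hne] using ConsistentWith.of_ECest_eq_empty hempty

theorem AASInvariant.of_runStr (hv : Ev ⊆ Eobs) (hreal : Realizes ξ z0 δ Eobs S X0)
    {h : List (MEvent E)} {st : MState X Z E}
    (hrun : runStr (AASf δ Eobs Eobsᶜ Ev ξ) (AASq0 X0 z0) h = some st) :
    AASInvariant δ Eobs S X0 ξ z0 (tam h) st := by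
  refine runStr_induction (P := fun h st => AASInvariant δ Eobs S X0 ξ z0 (tam h) st)
    ?_ ?_ hrun
  · exact ConsistentWith.init hreal
  · intro h st e st' hst hstep
    rw [tam_append]
    rcases st with qe | qa
    · exact hst.env_step hstep
    · exact hst.attack_step hv hreal hstep

end AllAttackStructure

theorem stmt6_general (δ : X → E → Option X) (Eobs Euo Ev : Set E)
    (hpart : ∀ e, e ∈ Euo ↔ e ∉ Eobs) (hv : Ev ⊆ Eobs) (S : List E → Set E) (X0 : Set X)
    (ξ : Z → E → Option Z) (z0 : Z) (hreal : Realizes ξ z0 δ Eobs S X0)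
    (h : List (MEvent E)) (q : Set X) (qt : Set (X × X)) (zo : Option Z)
    (hrun : runStr (AASf δ Eobs Euo Ev ξ) (AASq0 X0 z0) h = some (Sum.inl (q, qt, zo))) :
    ECest δ Eobs S X0 (tam h) = URset δ Euo (ΔHopt ξ zo) q := by
  obtain rfl : Euo = Eobsᶜ := Set.ext hpart
  exact (AASInvariant.of_runStr hv hreal hrun).ECest_eq

/-! ## STATEMENT 6 (Proposition 1) -/
theorem stmt6 [Fintype X] [Fintype E] [Fintype Z] (δ : X → E → Option X)
    (Eobs Euo Ev : Set E) (hpart : ∀ e, e ∈ Euo ↔ e ∉ Eobs) (hv : Ev ⊆ Eobs)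
    (Euc : Set E) (S : List E → Set E) (hΓ : ∀ α, Euc ⊆ S α) (X0 : Set X)
    (ξ : Z → E → Option Z) (z0 : Z) (hreal : Realizes ξ z0 δ Eobs S X0)
    (h : List (MEvent E)) (q : Set X) (qt : Set (X × X)) (zo : Option Z)
    (hrun : runStr (AASf δ Eobs Euo Ev ξ) (AASq0 X0 z0) h = some (Sum.inl (q, qt, zo))) :
    ECest δ Eobs S X0 (tam h) = URset δ Euo (ΔHopt ξ zo) q := by
  exact stmt6_general δ Eobs Euo Ev hpart hv S X0 ξ z0 hreal h q qt zo hrun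

end DES
end

section
/- (Proposition 4) Let q_e be an undetectable environment state of the All Attack Structure M. Then every environment state reachable from q_e in M is either an undetectable state or a negative detected state. -/
open scoped Classical

namespace DES

variable {X E Z : Type*}

/-!
Call a set of augmented states `(x₀, x)` masked if each of its pairs with a secret first component
shares its second component with a pair whose first component is not secret. An environment state
is undetectable or negative detected exactly when the unobservable reach of its estimate is masked.
Events of the augmented system act on the second component only, so both members of such a couple
can be moved by the same string, and masking survives every unobservable and observable reach.
The attacker's choice affects the new plant estimate and supervisor state, hence the control
decision used next, but never the genuine event that moves the augmented estimate.
-/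

theorem runStr_induction_s11 {f : X → E → Option X} {P : X → Prop}
    (hstep : ∀ x e y, P x → f x e = some y → P y) {x y : X} {t : List E}
    (hx : P x) (hrun : runStr f x t = some y) : P y := by
  induction t generalizing x with
  | nil => exact Option.some.inj hrun ▸ hx
  | cons e t ih =>
    obtain ⟨x', hstep_eq, hrun'⟩ := Option.bind_eq_some_iff.mp hrun
    exact ih (hstep x e x' hx hstep_eq) hrun'

section Augmented

variable {δ : X → E → Option X}

theorem runStr_augDelta (p : X × X) (s : List E) :
    runStr (augDelta δ) p s = (runStr δ p.2 s).map fun y => (p.1, y) := by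
  induction s generalizing p with
  | nil => rfl
  | cons e s ih => cases h : δ p.2 e <;> simp [runStr, augDelta, h, ih]

theorem mem_URset_augDelta {Euo γ : Set E} {qt : Set (X × X)} {p : X × X} :
    p ∈ URset (augDelta δ) Euo γ qt ↔ ∃ x, (p.1, x) ∈ qt ∧ p.2 ∈ URset δ Euo γ {x} := by
  constructor
  · rintro ⟨⟨x₀, x⟩, hx, s, hs, hrun⟩
    rw [runStr_augDelta] at hrun
    obtain ⟨y, hy, rfl⟩ := Option.map_eq_some_iff.mp hrun
    exact ⟨x, hx, x, rfl, s, hs, hy⟩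
  · rintro ⟨x, hx, _, rfl, s, hs, hrun⟩
    exact ⟨_, hx, s, hs, by rw [runStr_augDelta, hrun, Option.map_some]⟩

theorem mem_NXset_augDelta {σ : E} {qt : Set (X × X)} {p : X × X} :
    p ∈ NXset (augDelta δ) σ qt ↔ ∃ x, (p.1, x) ∈ qt ∧ p.2 ∈ NXset δ σ {x} := by
  constructor
  · rintro ⟨⟨x₀, x⟩, hx, hstep⟩
    obtain ⟨y, hy, rfl⟩ := Option.map_eq_some_iff.mp hstep
    exact ⟨x, hx, x, rfl, hy⟩
  · rintro ⟨x, hx, _, rfl, hstep⟩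
    exact ⟨_, hx, by rw [augDelta, hstep, Option.map_some]⟩

end Augmented

/-- A set of augmented states is masked with respect to `Xsec` if the current state of each of its
pairs never reveals that the run started in `Xsec`. This is the second clause of `Undet`, stated
for an arbitrary set of pairs. -/
def Masked (Xsec : Set X) (qt : Set (X × X)) : Prop :=
  ∀ p ∈ qt, p.1 ∈ Xsec → ∃ p' ∈ qt, p'.2 = p.2 ∧ p'.1 ∉ Xsec

namespace Masked

variable {δ : X → E → Option X} {Xsec : Set X} {qt : Set (X × X)}

theorem of_mem_iff {qt' : Set (X × X)} {R : X → Set X} (h : Masked Xsec qt)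
    (hmem : ∀ p, p ∈ qt' ↔ ∃ x, (p.1, x) ∈ qt ∧ p.2 ∈ R x) : Masked Xsec qt' := by
  intro p hp hsecret
  obtain ⟨x, hx, hR⟩ := (hmem p).mp hp
  obtain ⟨⟨x₀', _⟩, hx', rfl, hpublic⟩ := h _ hx hsecret
  exact ⟨(x₀', p.2), (hmem _).mpr ⟨_, hx', hR⟩, rfl, hpublic⟩

theorem urSet (Euo γ : Set E) (h : Masked Xsec qt) :
    Masked Xsec (URset (augDelta δ) Euo γ qt) :=
  h.of_mem_iff fun _ => mem_URset_augDelta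

theorem nxSet (σ : E) (h : Masked Xsec qt) : Masked Xsec (NXset (augDelta δ) σ qt) :=
  h.of_mem_iff fun _ => mem_NXset_augDelta

end Masked

section AllAttackStructure

variable {δ : X → E → Option X} {Eobs Euo Ev : Set E} {ξ : Z → E → Option Z} {Xsec : Set X}

/-- The augmented estimate carried by a state of the All Attack Structure, closed under the
unobservable reach that the current control decision allows. The control decision is empty at an
environment state whose supervisor component is `z_att`. -/
def augReach (δ : X → E → Option X) (Euo : Set E) (ξ : Z → E → Option Z) :
    MState X Z E → Set (X × X)
  | Sum.inl (_, qt, z) => URset (augDelta δ) Euo (ΔHopt ξ z) qt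
  | Sum.inr (_, qt, z, _) => URset (augDelta δ) Euo (ΔH ξ z) qt

theorem undet_or_negDet_iff_masked_augReach {qe : EnvState X Z} :
    Undet δ Euo ξ Xsec qe ∨ NegDet Xsec qe ↔ Masked Xsec (augReach δ Euo ξ (Sum.inl qe)) := by
  constructor
  · rintro (hundet | hneg)
    · exact hundet.2
    · intro p hp hsecret
      obtain ⟨x, hx, -⟩ := mem_URset_augDelta.mp hp
      exact absurd ⟨⟨_, hx, rfl⟩, hsecret⟩ (Set.eq_empty_iff_forall_notMem.mp hneg p.1)
  · intro hmasked
    rcases Set.eq_empty_or_nonempty (Iset qe.2.1 ∩ Xsec) with hneg | hne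
    · exact Or.inr hneg
    · exact Or.inl ⟨hne, hmasked⟩

theorem exists_eq_inr_of_AASf_inl {q : Set X} {qt : Set (X × X)} {zo : Option Z} {e : MEvent E}
    {st : MState X Z E} (h : AASf δ Eobs Euo Ev ξ (Sum.inl (q, qt, zo)) e = some st) :
    ∃ z σ, zo = some z ∧ st = Sum.inr (q, qt, z, σ) := by
  rcases zo with _ | z <;> rcases e with σ | a <;> simp only [AASf, reduceCtorEq] at h
  split_ifs at h
  exact ⟨z, σ, rfl, (Option.some.inj h).symm⟩

theorem exists_eq_inl_of_AASf_inr {q : Set X} {qt : Set (X × X)} {z : Z} {σ : E} {e : MEvent E}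
    {st : MState X Z E} (h : AASf δ Eobs Euo Ev ξ (Sum.inr (q, qt, z, σ)) e = some st) :
    ∃ q' z', st = Sum.inl
      (q', NXset (augDelta δ) σ (URset (augDelta δ) Euo (ΔH ξ z) qt), z') := by
  rcases e with _ | _ | σa <;> simp only [AASf, reduceCtorEq] at h <;> split_ifs at h
  · exact ⟨_, _, (Option.some.inj h).symm⟩
  · exact ⟨_, _, (Option.some.inj h).symm⟩
  · obtain ⟨z', -, hst⟩ := Option.map_eq_some_iff.mp h
    exact ⟨_, _, hst.symm⟩
  · exact ⟨_, _, (Option.some.inj h).symm⟩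

theorem Masked.augReach_of_AASf {st st' : MState X Z E} {e : MEvent E}
    (hst : Masked Xsec (augReach δ Euo ξ st)) (hstep : AASf δ Eobs Euo Ev ξ st e = some st') :
    Masked Xsec (augReach δ Euo ξ st') := by
  rcases st with ⟨q, qt, zo⟩ | ⟨q, qt, z, σ⟩
  · obtain ⟨z, σ, rfl, rfl⟩ := exists_eq_inr_of_AASf_inl hstep
    exact hst
  · obtain ⟨q', z', rfl⟩ := exists_eq_inl_of_AASf_inr hstep
    exact (hst.nxSet σ).urSet Euo (ΔHopt ξ z')

end AllAttackStructure

theorem stmt11_general {δ : X → E → Option X} {Eobs Euo Ev : Set E} {ξ : Z → E → Option Z}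
    {Xsec : Set X} {qe qe' : EnvState X Z} {t : List (MEvent E)}
    (hqe : Undet δ Euo ξ Xsec qe ∨ NegDet Xsec qe)
    (hreach : runStr (AASf δ Eobs Euo Ev ξ) (Sum.inl qe) t = some (Sum.inl qe')) :
    Undet δ Euo ξ Xsec qe' ∨ NegDet Xsec qe' := by
  rw [undet_or_negDet_iff_masked_augReach] at hqe ⊢
  exact runStr_induction_s11 (P := fun st => Masked Xsec (augReach δ Euo ξ st))
    (fun _ _ _ => Masked.augReach_of_AASf) hqe hreach

/-! ## STATEMENT 11 (Proposition 4) -/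
theorem stmt11 [Fintype X] [Fintype E] [Fintype Z] (δ : X → E → Option X)
    (Eobs Euo Ev : Set E) (hpart : ∀ e, e ∈ Euo ↔ e ∉ Eobs) (hv : Ev ⊆ Eobs)
    (Euc : Set E) (S : List E → Set E) (hΓ : ∀ α, Euc ⊆ S α) (X0 : Set X)
    (ξ : Z → E → Option Z) (z0 : Z) (hreal : Realizes ξ z0 δ Eobs S X0)
    (Xsec : Set X) (hsec : Xsec ⊆ X0)
    (qe qe' : EnvState X Z) (t : List (MEvent E))
    (hqe : Undet δ Euo ξ Xsec qe)
    (hreach : runStr (AASf δ Eobs Euo Ev ξ) (Sum.inl qe) t = some (Sum.inl qe')) :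
    Undet δ Euo ξ Xsec qe' ∨ NegDet Xsec qe' := by
  exact stmt11_general (Or.inl hqe) hreach

end DES
end

section
/- Let m be a single attack structure of the simplified AAS M^s with induced attack strategy A_m. Then for every observation α ∈ P(L(S_{A_m}/G)) such that obs⁻¹_m(α) exists, the extended string determined by A_m coincides with the unique extended string of m: α_{A_m} = obs⁻¹_m(α). -/
open scoped Classical

namespace DES

variable {X E Z : Type*}

/-!
Environment and attacker strictly take turns in the AAS, so an extended string ending at an
environment state is either empty or ends in a pair `σ σ̂ₐ` whose removal leads back to an
environment state. The induced strategy reports `σₐ` on the observation of that string, and `α_A`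
ends in the same pair, so the two strings agree by induction on the observation.
-/

section PartialAutomaton

theorem runStr_append (δ : X → E → Option X) (x : X) (s t : List E) :
    runStr δ x (s ++ t) = (runStr δ x s).bind fun y => runStr δ y t := by
  induction s generalizing x with
  | nil => rfl
  | cons σ s ih => simp only [List.cons_append, runStr, ih, Option.bind_assoc]

theorem runStr_concat_eq_some_iff {δ : X → E → Option X} {x y : X} {s : List E} {σ : E} :
    runStr δ x (s ++ [σ]) = some y ↔ ∃ w, runStr δ x s = some w ∧ δ w σ = some y := by
  simp [runStr_append, runStr, Option.bind_eq_some_iff]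

theorem mem_langFrom_of_append {δ : X → E → Option X} {x0 : X} {s t : List E}
    (hst : s ++ t ∈ LangFrom δ x0) : s ∈ LangFrom δ x0 := by
  have hrun : ((runStr δ x0 s).bind fun y => runStr δ y t).isSome := runStr_append δ x0 s t ▸ hst
  exact Option.isSome_of_isSome_bind hrun

theorem mem_projSet_lang_of_append {δ : X → E → Option X} {Eobs : Set E} {X0 : Set X}
    {α β : List E} (hαβ : α ++ β ∈ projSet Eobs (Lang δ X0)) : α ∈ projSet Eobs (Lang δ X0) := by
  obtain ⟨s, ⟨x0, hx0, hs⟩, hproj⟩ := hαβ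
  obtain ⟨s₁, s₂, rfl, hα, -⟩ := List.filter_eq_append_iff.1 hproj
  exact ⟨s₁, ⟨x0, hx0, mem_langFrom_of_append hs⟩, hα⟩

theorem CLLang.mem_langFrom {δ : X → E → Option X} {Eobs : Set E} {S : List E → Set E} {x0 : X}
    {s : List E} (hs : CLLang δ Eobs S x0 s) : s ∈ LangFrom δ x0 := by
  cases hs with
  | nil => rfl
  | snoc _ _ _ hrun _ => exact hrun

theorem clLangAll_subset_lang (δ : X → E → Option X) (Eobs : Set E) (S : List E → Set E)
    (X0 : Set X) : CLLangAll δ Eobs S X0 ⊆ Lang δ X0 :=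
  fun _ ⟨x0, hx0, hs⟩ => ⟨x0, hx0, hs.mem_langFrom⟩

end PartialAutomaton

section ExtendedString

theorem extStr_concat (A : List E → Option E) (pre α : List E) (σ : E) :
    extStr A pre (α ++ [σ]) =
      extStr A pre α ++ [Sum.inl σ, Sum.inr (A (pre ++ α ++ [σ]))] := by
  induction α generalizing pre with
  | nil => simp [extStr]
  | cons τ α ih => simp [extStr, ih]

theorem obs_append_pair (h : List (MEvent E)) (σ : E) (a : Option E) :
    obs (h ++ [Sum.inl σ, Sum.inr a]) = obs h ++ [σ] := by
  simp [obs]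

end ExtendedString

/-- A structure over AAS states in which the environment and the attacker strictly take turns:
genuine events lead from environment to attack states and attack events lead back. It is the only
feature of the (simplified) AAS on which the shape of extended strings depends. -/
structure Alternating (f : MState X Z E → MEvent E → Option (MState X Z E)) : Prop where
  of_eq_env : ∀ {st e qe}, f st e = some (Sum.inl qe) → ∃ qa a, st = Sum.inr qa ∧ e = Sum.inr a
  of_eq_atk : ∀ {st e qa}, f st e = some (Sum.inr qa) → ∃ qe σ, st = Sum.inl qe ∧ e = Sum.inl σ

section Alternating

variable {f g : MState X Z E → MEvent E → Option (MState X Z E)}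

theorem Alternating.of_subautomaton (hg : Alternating g)
    (hsub : ∀ st e st', f st e = some st' → g st e = some st') : Alternating f where
  of_eq_env hst := hg.of_eq_env (hsub _ _ _ hst)
  of_eq_atk hst := hg.of_eq_atk (hsub _ _ _ hst)

theorem alternating_AASf (δ : X → E → Option X) (Eobs Euo Ev : Set E) (ξ : Z → E → Option Z) :
    Alternating (AASf δ Eobs Euo Ev ξ) where
  of_eq_env {st e qe} hst := by
    rcases st with ⟨q, qt, _ | z⟩ | qa <;> rcases e with σ | a <;> grind [AASf]
  of_eq_atk {st e qa} hst := by
    rcases st with ⟨q, qt, _ | z⟩ | ⟨q, qt, z, τ⟩ <;> rcases e with σ | _ | σ <;>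
      grind [AASf, Option.map_eq_some_iff]

theorem AASf_eq_some_of_SAASf_eq_some {δ : X → E → Option X} {Eobs Euo Ev : Set E}
    {ξ : Z → E → Option Z} {Xsec : Set X} {st st' : MState X Z E} {e : MEvent E}
    (hst : SAASf δ Eobs Euo Ev ξ Xsec st e = some st') : AASf δ Eobs Euo Ev ξ st e = some st' := by
  rcases st with qe | qa
  · exact (Option.ite_none_left_eq_some.1 hst).2
  · exact hst

theorem IsSAS.alternating {δ : X → E → Option X} {Eobs Euo Ev : Set E} {ξ : Z → E → Option Z}
    {z0 : Z} {X0 Xsec : Set X} (hf : IsSAS δ Eobs Euo Ev ξ z0 X0 Xsec f) : Alternating f :=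
  (alternating_AASf δ Eobs Euo Ev ξ).of_subautomaton
    fun st e st' hst => AASf_eq_some_of_SAASf_eq_some (hf.1 st e st' hst)

variable {q0 : EnvState X Z} {h : List (MEvent E)}

theorem Alternating.eq_nil_or_append_pair (hf : Alternating f) (hh : LeM f (Sum.inl q0) h) :
    h = [] ∨ ∃ h' σ a, h = h' ++ [Sum.inl σ, Sum.inr a] ∧ LeM f (Sum.inl q0) h' := by
  obtain ⟨qe, hrun⟩ := hh
  rcases List.eq_nil_or_concat' h with rfl | ⟨t, e, rfl⟩
  · exact Or.inl rfl
  obtain ⟨st, ht, hst⟩ := runStr_concat_eq_some_iff.1 hrun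
  obtain ⟨qa, a, rfl, rfl⟩ := hf.of_eq_env hst
  rcases List.eq_nil_or_concat' t with rfl | ⟨h', e, rfl⟩
  · simp [runStr] at ht
  obtain ⟨st', hh', hst'⟩ := runStr_concat_eq_some_iff.1 ht
  obtain ⟨qe', σ, rfl, rfl⟩ := hf.of_eq_atk hst'
  exact Or.inr ⟨h', σ, a, by simp, qe', hh'⟩

theorem Alternating.eq_nil_of_obs_eq_nil (hf : Alternating f) (hh : LeM f (Sum.inl q0) h)
    (hobs : obs h = []) : h = [] := by
  rcases hf.eq_nil_or_append_pair hh with rfl | ⟨h', σ, a, rfl, -⟩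
  · rfl
  · simp [obs_append_pair] at hobs

theorem Alternating.exists_eq_append_pair_of_obs_eq_concat (hf : Alternating f)
    (hh : LeM f (Sum.inl q0) h) {α : List E} {σ : E} (hobs : obs h = α ++ [σ]) :
    ∃ h' a, h = h' ++ [Sum.inl σ, Sum.inr a] ∧ LeM f (Sum.inl q0) h' ∧ obs h' = α := by
  rcases hf.eq_nil_or_append_pair hh with rfl | ⟨h', τ, a, rfl, hh'⟩
  · simp [obs] at hobs
  · rw [obs_append_pair] at hobs
    obtain ⟨hα, hτ⟩ := List.append_inj' hobs rfl
    obtain rfl : τ = σ := by simpa using hτ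
    exact ⟨h', a, rfl, hh', hα⟩

end Alternating

theorem InducedStrategy.apply_obs_concat {δ : X → E → Option X} {Eobs : Set E} {X0 : Set X}
    {f : MState X Z E → MEvent E → Option (MState X Z E)} {z0 : Z} {A : List E → Option E}
    (hA : InducedStrategy δ Eobs X0 f z0 A) {h : List (MEvent E)} {σ : E} {a : Option E}
    (hh : LeM f (AASq0 X0 z0) (h ++ [Sum.inl σ, Sum.inr a]))
    (hmem : obs h ++ [σ] ∈ projSet Eobs (Lang δ X0)) : A (obs h ++ [σ]) = a := by
  have hlast := (hA.2 _ _ hmem).2 _ hh (obs_append_pair h σ a)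
  simpa using hlast.symm

theorem stmt13_general (δ : X → E → Option X) (Eobs : Set E) (X0 : Set X) (z0 : Z)
    (fm : MState X Z E → MEvent E → Option (MState X Z E)) (hm : Alternating fm)
    (Am : List E → Option E) (hInd : InducedStrategy δ Eobs X0 fm z0 Am)
    (α : List E) (hmem : α ∈ projSet Eobs (Lang δ X0))
    (h : List (MEvent E)) (hh : LeM fm (AASq0 X0 z0) h) (hobs : obs h = α) :
    extStr Am [] α = h := by
  induction α using List.reverseRecOn generalizing h with
  | nil => exact (hm.eq_nil_of_obs_eq_nil hh hobs).symm
  | append_singleton α σ ih =>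
    obtain ⟨h', a, rfl, hh', rfl⟩ := hm.exists_eq_append_pair_of_obs_eq_concat hh hobs
    have hprefix : extStr Am [] (obs h') = h' := ih (mem_projSet_lang_of_append hmem) h' hh' rfl
    have hlast : Am (obs h' ++ [σ]) = a := hInd.apply_obs_concat hh hmem
    rw [extStr_concat, hprefix, List.nil_append, hlast]

/-! ## STATEMENT 13 -/
theorem stmt13 [Fintype X] [Fintype E] [Fintype Z] (δ : X → E → Option X)
    (Eobs Euo Ev : Set E) (hpart : ∀ e, e ∈ Euo ↔ e ∉ Eobs) (hv : Ev ⊆ Eobs)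
    (Euc : Set E) (S : List E → Set E) (hΓ : ∀ α, Euc ⊆ S α) (X0 : Set X)
    (ξ : Z → E → Option Z) (z0 : Z) (hreal : Realizes ξ z0 δ Eobs S X0)
    (Xsec : Set X) (hsec : Xsec ⊆ X0)
    (fm : MState X Z E → MEvent E → Option (MState X Z E))
    (hm : IsSAS δ Eobs Euo Ev ξ z0 X0 Xsec fm)
    (Am : List E → Option E) (hInd : InducedStrategy δ Eobs X0 fm z0 Am)
    (α : List E)
    (hmem : α ∈ projSet Eobs (CLLangAll δ Eobs (fun β => S (gA Am β)) X0))
    (h : List (MEvent E)) (hh : LeM fm (AASq0 X0 z0) h) (hobs : obs h = α) :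
    extStr Am [] α = h := by
  exact stmt13_general δ Eobs X0 z0 fm hm.alternating Am hInd α
    (Set.image_mono (clLangAll_subset_lang δ Eobs _ X0) hmem) h hh hobs

end DES
end
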